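/- Let L be a finite semidistributive lattice. Then for every x ∈ L there exists a unique y ∈ L such that the set of join-irreducible labels of coverings x ⋗ x' (over all x' covered by x) equals the set of join-irreducible labels of coverings y' ⋗ y (over all y' covering y); moreover this unique y equals κ̄(x) := ⨅{ κ(j) | j ∈ CJR(x) }. Furthermore, the map κ̄ : L → L is a bijection. -/

import Mathlib

/-- A canonical join representation: `x = ⨆ A`, `A` is an antichain, and `A`
refines every join representation of `x`. -/
def IsCanonicalJoinRep {α : Type*} [CompleteLattice α] (x : α) (A : Set α) : Prop :=
  sSup A = x ∧ IsAntichain (· ≤ ·) A ∧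
    ∀ B : Set α, sSup B = x → ∀ a ∈ A, ∃ b ∈ B, a ≤ b

/-- The set of join-irreducible labels of the coverings `x ⋗ x'` below `x`:
the label of a covering `x ⋗ x'` is the minimum of `{z | x' ⊔ z = x}`. -/
def downLabels {α : Type*} [CompleteLattice α] (x : α) : Set α :=
  {j : α | ∃ x' : α, x' ⋖ x ∧ IsLeast {z : α | x' ⊔ z = x} j}

/-- The set of join-irreducible labels of the coverings `y' ⋗ y` above `y`. -/
def upLabels {α : Type*} [CompleteLattice α] (y : α) : Set α :=
  {j : α | ∃ y' : α, y ⋖ y' ∧ IsLeast {z : α | y ⊔ z = y'} j}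

/-!
Call a set `A` of join-irreducibles *κ-orthogonal* if `i ≤ κ j` for all distinct `i, j ∈ A`. Both
canonical join representations and sets of upper labels are κ-orthogonal, and a κ-orthogonal set
`A` is recovered both as the canonical join representation (equivalently, the set of lower labels)
of `⨆ A` and as the set of upper labels of `⨅ κ '' A`. Since, conversely, every `y` is the meet of
the `κ j` over its upper labels `j`, the elements `x` and `κ̄ x` are two encodings of the same
κ-orthogonal set. Everything rests on one equivalence: if `j_* ≤ w`, then `w ≤ κ j` if and only if
`j ≰ w`.
-/

section CoveringLabel

variable {α : Type*} [SemilatticeSup α] {a b j w : α}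

theorem sup_eq_of_covBy_of_not_le (hab : a ⋖ b) (hwb : w ≤ b) (hwa : ¬w ≤ a) : a ⊔ w = b :=
  (hab.eq_or_eq le_sup_left (sup_le hab.le hwb)).resolve_left fun h => hwa (sup_eq_left.1 h)

/-- `j` is the join-irreducible label of the covering `a ⋖ b`, the minimum of `{z | a ⊔ z = b}`. -/
def IsCoveringLabel (a b j : α) : Prop :=
  a ⋖ b ∧ IsLeast {z : α | a ⊔ z = b} j

namespace IsCoveringLabel

theorem le (h : IsCoveringLabel a b j) : j ≤ b :=
  le_sup_right.trans_eq h.2.1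

theorem not_le (h : IsCoveringLabel a b j) : ¬j ≤ a := fun hja =>
  h.1.lt.ne ((sup_eq_left.2 hja).symm.trans h.2.1)

theorem le_of_lt (h : IsCoveringLabel a b j) (hw : w < j) : w ≤ a := by
  by_contra hwa
  exact hw.not_ge (h.2.2 (sup_eq_of_covBy_of_not_le h.1 (hw.le.trans h.le) hwa))

end IsCoveringLabel

end CoveringLabel

section KappaOrthogonal

variable {α : Type*} [CompleteLattice α] {κ : α → α} {A B : Set α} {a b j w x : α}

/-- `j` is (completely) join-irreducible: it differs from `j_*`, the join of all elements strictly
below it. The element `j_*` is written out as `sSup {y | y < j}` throughout. -/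
def IsJoinIrred (j : α) : Prop :=
  j ≠ sSup {y : α | y < j}

/-- `κ` sends each join-irreducible `j` to the greatest `z` with `j ⊓ z = j_*`; its values at other
elements are arbitrary. -/
def IsKappaMap (κ : α → α) : Prop :=
  ∀ j : α, IsJoinIrred j → IsGreatest {z : α | j ⊓ z = sSup {y : α | y < j}} (κ j)

/-- `A` is a set of join-irreducibles with `i ≤ κ j` for all distinct `i, j ∈ A`. Such sets encode
the elements of the lattice, both as their joins and as the meets of their images under `κ`. -/
def IsKappaOrthogonal (κ : α → α) (A : Set α) : Prop :=
  (∀ j ∈ A, IsJoinIrred j) ∧ A.Pairwise fun i j => i ≤ κ j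

theorem sSup_setOf_lt_le (j : α) : sSup {y : α | y < j} ≤ j :=
  sSup_le fun _ hy => le_of_lt hy

namespace IsKappaMap

theorem not_le_kappa (hκ : IsKappaMap κ) (hj : IsJoinIrred j) : ¬j ≤ κ j := fun h =>
  hj ((inf_eq_left.2 h).symm.trans (hκ j hj).1)

theorem le_kappa_iff_not_le (hκ : IsKappaMap κ) (hj : IsJoinIrred j)
    (hw : sSup {y : α | y < j} ≤ w) : w ≤ κ j ↔ ¬j ≤ w := by
  refine ⟨fun hwκ hjw => hκ.not_le_kappa hj (hjw.trans hwκ), fun hjw => (hκ j hj).2 ?_⟩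
  exact le_antisymm (le_sSup (inf_lt_left.2 hjw)) (le_inf (sSup_setOf_lt_le j) hw)

theorem le_kappa_of_lt (hκ : IsKappaMap κ) (hj : IsJoinIrred j) (hw : w < j) : w ≤ κ j :=
  (le_sSup (s := {y : α | y < j}) hw).trans ((hκ j hj).1.ge.trans inf_le_right)

end IsKappaMap

namespace IsCoveringLabel

theorem sSup_setOf_lt_le (h : IsCoveringLabel a b j) : sSup {y : α | y < j} ≤ a :=
  sSup_le fun _ => h.le_of_lt

theorem isJoinIrred (h : IsCoveringLabel a b j) : IsJoinIrred j := fun hj =>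
  h.not_le (hj.trans_le h.sSup_setOf_lt_le)

end IsCoveringLabel

theorem isKappaOrthogonal_upLabels (hκ : IsKappaMap κ) (y : α) :
    IsKappaOrthogonal κ (upLabels y) := by
  refine ⟨fun j ⟨y', hj⟩ => IsCoveringLabel.isJoinIrred hj, ?_⟩
  rintro i ⟨yi, hi : IsCoveringLabel y yi i⟩ j ⟨yj, hj : IsCoveringLabel y yj j⟩ hij
  have hjyi : ¬j ≤ yi := fun hjyi => hij <| by
    obtain rfl : yi = yj := (sup_eq_of_covBy_of_not_le hi.1 hjyi hj.not_le).symm.trans hj.2.1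
    exact hi.2.unique hj.2
  have hstar : sSup {z : α | z < j} ≤ yi := hj.sSup_setOf_lt_le.trans hi.1.le
  exact hi.le.trans ((hκ.le_kappa_iff_not_le hj.isJoinIrred hstar).2 hjyi)

namespace IsKappaOrthogonal

theorem sSup_inf_kappa_covBy (hA : IsKappaOrthogonal κ A) (hκ : IsKappaMap κ) (hj : j ∈ A) :
    sSup A ⊓ κ j ⋖ sSup A := by
  have hirr := hA.1 j hj
  refine ⟨inf_lt_left.2 fun h => hκ.not_le_kappa hirr ((le_sSup hj).trans h), fun w hw hwA => ?_⟩
  have hstar : sSup {y : α | y < j} ≤ w := sSup_le fun y hy =>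
    (le_inf ((le_of_lt hy).trans (le_sSup hj)) (hκ.le_kappa_of_lt hirr hy)).trans hw.le
  have hjw : j ≤ w := by
    by_contra hjw
    exact hw.not_ge (le_inf hwA.le ((hκ.le_kappa_iff_not_le hirr hstar).2 hjw))
  refine hwA.not_ge (sSup_le fun i hi => ?_)
  rcases eq_or_ne i j with rfl | hij
  exacts [hjw, (le_inf (le_sSup hi) (hA.2 hi hj hij)).trans hw.le]

theorem le_sInf_kappa_image_of_lt (hA : IsKappaOrthogonal κ A) (hκ : IsKappaMap κ) (hj : j ∈ A)
    (hw : w < j) : w ≤ sInf (κ '' A) := by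
  refine le_sInf ?_
  rintro _ ⟨i, hi, rfl⟩
  rcases eq_or_ne j i with rfl | hji
  exacts [hκ.le_kappa_of_lt (hA.1 j hj) hw, hw.le.trans (hA.2 hj hi hji)]

theorem not_le_sInf_kappa_image (hA : IsKappaOrthogonal κ A) (hκ : IsKappaMap κ) (hj : j ∈ A) :
    ¬j ≤ sInf (κ '' A) := fun h =>
  hκ.not_le_kappa (hA.1 j hj) (h.trans (sInf_le (Set.mem_image_of_mem κ hj)))

theorem exists_mem_le_of_sInf_kappa_image_lt (hA : IsKappaOrthogonal κ A) (hκ : IsKappaMap κ)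
    (hw : sInf (κ '' A) < w) : ∃ j ∈ A, j ≤ w := by
  by_contra! hnot
  refine hw.not_ge (le_sInf ?_)
  rintro _ ⟨j, hj, rfl⟩
  have hstar : sSup {y : α | y < j} ≤ w :=
    sSup_le fun y hy => (hA.le_sInf_kappa_image_of_lt hκ hj hy).trans hw.le
  exact (hκ.le_kappa_iff_not_le (hA.1 j hj) hstar).2 (hnot j hj)

theorem sInf_kappa_image_covBy_sup (hA : IsKappaOrthogonal κ A) (hκ : IsKappaMap κ) (hj : j ∈ A) :
    sInf (κ '' A) ⋖ sInf (κ '' A) ⊔ j := by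
  refine ⟨left_lt_sup.2 (hA.not_le_sInf_kappa_image hκ hj), fun w hw hwj => ?_⟩
  obtain ⟨i, hi, hiw⟩ := hA.exists_mem_le_of_sInf_kappa_image_lt hκ hw
  rcases eq_or_ne j i with rfl | hji
  · exact hwj.not_ge (sup_le hw.le hiw)
  · have hκi : sInf (κ '' A) ⊔ j ≤ κ i :=
      sup_le (sInf_le (Set.mem_image_of_mem κ hi)) (hA.2 hj hi hji)
    exact hκ.not_le_kappa (hA.1 i hi) (hiw.trans (hwj.le.trans hκi))

end IsKappaOrthogonal

namespace IsCanonicalJoinRep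

theorem exists_mem_isCoveringLabel (hA : IsCanonicalJoinRep b A) (hab : a ⋖ b) :
    ∃ j ∈ A, IsCoveringLabel a b j := by
  obtain ⟨hsup, -, hrefines⟩ := hA
  obtain ⟨j, hjA, hja⟩ : ∃ j ∈ A, ¬j ≤ a := by
    by_contra! hle
    exact hab.lt.not_ge (hsup ▸ sSup_le hle)
  refine ⟨j, hjA, hab, sup_eq_of_covBy_of_not_le hab (hsup ▸ le_sSup hjA) hja, fun z hz => ?_⟩
  obtain ⟨c, rfl | rfl, hjc⟩ := hrefines {a, z} (sSup_pair.trans hz) j hjA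
  exacts [absurd hjc hja, hjc]

theorem isCoveringLabel (hA : IsCanonicalJoinRep b A) (hab : a ⋖ b) (hjb : j ≤ b) (hja : ¬j ≤ a)
    (hlt : ∀ y < j, y ≤ a) : IsCoveringLabel a b j := by
  obtain ⟨l, -, hl⟩ := hA.exists_mem_isCoveringLabel hab
  have hlj : l ≤ j := hl.2.2 (sup_eq_of_covBy_of_not_le hab hjb hja)
  obtain rfl : l = j := eq_of_le_of_not_lt hlj fun h => hl.not_le (hlt l h)
  exact hl

theorem not_le_sSup_sdiff_sup (hA : IsCanonicalJoinRep x A) (hj : j ∈ A) :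
    ¬j ≤ sSup (A \ {j}) ⊔ sSup {y : α | y < j} := by
  obtain ⟨hsup, hanti, hrefines⟩ := hA
  intro hle
  have hrep : sSup (A \ {j} ∪ {y : α | y < j}) = x := by
    rw [sSup_union]
    refine le_antisymm (sup_le ?_ ?_) (hsup ▸ sSup_le fun i hi => ?_)
    · exact hsup ▸ sSup_le_sSup Set.sdiff_subset
    · exact (sSup_setOf_lt_le j).trans (hsup ▸ le_sSup hj)
    · rcases eq_or_ne i j with rfl | hij
      exacts [hle, (le_sSup (s := A \ {j}) ⟨hi, hij⟩).trans le_sup_left]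
  obtain ⟨i, hi | hi, hji⟩ := hrefines _ hrep j hj
  exacts [hi.2 (hanti.eq hj hi.1 hji).symm, hi.not_ge hji]

theorem isKappaOrthogonal (hA : IsCanonicalJoinRep x A) (hκ : IsKappaMap κ) :
    IsKappaOrthogonal κ A := by
  have hirred : ∀ j ∈ A, IsJoinIrred j := fun j hj h =>
    hA.not_le_sSup_sdiff_sup hj (h.trans_le le_sup_right)
  refine ⟨hirred, fun i hi j hj hij => ?_⟩
  have hκj : sSup (A \ {j}) ⊔ sSup {y : α | y < j} ≤ κ j :=
    (hκ.le_kappa_iff_not_le (hirred j hj) le_sup_right).2 (hA.not_le_sSup_sdiff_sup hj)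
  exact (le_sSup (s := A \ {j}) ⟨hi, hij⟩).trans (le_sup_left.trans hκj)

theorem eq_of_isKappaOrthogonal (hB : IsCanonicalJoinRep (sSup A) B) (hκ : IsKappaMap κ)
    (hA : IsKappaOrthogonal κ A) : B = A := by
  obtain ⟨hsup, hanti, hrefines⟩ := hB
  have hAB : A ⊆ B := fun j hj => by
    have hirr := hA.1 j hj
    obtain ⟨b, hb, hbκ⟩ : ∃ b ∈ B, ¬b ≤ κ j := by
      by_contra! hle
      exact hκ.not_le_kappa hirr ((le_sSup hj).trans (hsup ▸ sSup_le hle))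
    obtain ⟨i, hi, hbi⟩ := hrefines A rfl b hb
    obtain rfl : i = j := by
      by_contra hij
      exact hbκ (hbi.trans (hA.2 hi hj hij))
    exact eq_of_le_of_not_lt hbi (fun h => hbκ (hκ.le_kappa_of_lt hirr h)) ▸ hb
  refine Set.Subset.antisymm (fun b hb => ?_) hAB
  obtain ⟨i, hi, hbi⟩ := hrefines A rfl b hb
  exact hanti.eq hb (hAB hi) hbi ▸ hi

theorem downLabels_eq (hA : IsCanonicalJoinRep x A) (hκ : IsKappaMap κ) : downLabels x = A := by
  refine Set.Subset.antisymm ?_ fun j hj => ?_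
  · rintro j ⟨x', hx', hleast⟩
    obtain ⟨l, hl, hlabel⟩ := hA.exists_mem_isCoveringLabel hx'
    exact hlabel.2.unique hleast ▸ hl
  · have horth := hA.isKappaOrthogonal hκ
    have hcov : x ⊓ κ j ⋖ x := hA.1 ▸ horth.sSup_inf_kappa_covBy hκ hj
    have hjx : j ≤ x := hA.1 ▸ le_sSup hj
    have hjκ : ¬j ≤ x ⊓ κ j := fun h => hκ.not_le_kappa (horth.1 j hj) (h.trans inf_le_right)
    exact ⟨x ⊓ κ j, hA.isCoveringLabel hcov hjx hjκ fun w hw =>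
      le_inf (hw.le.trans hjx) (hκ.le_kappa_of_lt (horth.1 j hj) hw)⟩

end IsCanonicalJoinRep

theorem IsKappaOrthogonal.upLabels_sInf_kappa_image (hA : IsKappaOrthogonal κ A)
    (hκ : IsKappaMap κ) (hCJR : ∀ x : α, ∃ B, IsCanonicalJoinRep x B) :
    upLabels (sInf (κ '' A)) = A := by
  have hlabel : ∀ j ∈ A, IsCoveringLabel (sInf (κ '' A)) (sInf (κ '' A) ⊔ j) j := fun j hj => by
    obtain ⟨B, hB⟩ := hCJR (sInf (κ '' A) ⊔ j)
    exact hB.isCoveringLabel (hA.sInf_kappa_image_covBy_sup hκ hj) le_sup_right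
      (hA.not_le_sInf_kappa_image hκ hj) fun w hw => hA.le_sInf_kappa_image_of_lt hκ hj hw
  refine Set.Subset.antisymm ?_ fun j hj => ⟨_, hlabel j hj⟩
  rintro l ⟨y', hy', hl⟩
  obtain ⟨j, hj, hjy'⟩ := hA.exists_mem_le_of_sInf_kappa_image_lt hκ hy'.lt
  obtain rfl : sInf (κ '' A) ⊔ j = y' :=
    sup_eq_of_covBy_of_not_le hy' hjy' (hA.not_le_sInf_kappa_image hκ hj)
  exact hl.unique (hlabel j hj).2 ▸ hj

theorem sInf_kappa_image_upLabels [IsStronglyAtomic α] (hκ : IsKappaMap κ)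
    (hCJR : ∀ x : α, ∃ B, IsCanonicalJoinRep x B) (y : α) : sInf (κ '' upLabels y) = y := by
  refine (eq_of_le_of_not_lt (le_sInf ?_) fun hlt => ?_).symm
  · rintro _ ⟨j, ⟨y', hj : IsCoveringLabel y y' j⟩, rfl⟩
    exact (hκ.le_kappa_iff_not_le hj.isJoinIrred hj.sSup_setOf_lt_le).2 hj.not_le
  · obtain ⟨y', hy', hle⟩ := exists_covBy_le_of_lt hlt
    obtain ⟨B, hB⟩ := hCJR y'
    obtain ⟨j, -, hj⟩ := hB.exists_mem_isCoveringLabel hy'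
    have hκj : sInf (κ '' upLabels y) ≤ κ j := sInf_le ⟨j, ⟨y', hj⟩, rfl⟩
    exact hκ.not_le_kappa hj.isJoinIrred (hj.le.trans (hle.trans hκj))

end KappaOrthogonal

theorem stmt_17_general {α : Type*} [CompleteLattice α] [IsStronglyAtomic α] (κ : α → α)
    (hκ : IsKappaMap κ) (CJR : α → Set α) (hCJR : ∀ x : α, IsCanonicalJoinRep x (CJR x)) :
    (∀ x : α, downLabels x = upLabels (sInf (κ '' CJR x)) ∧
      ∀ y : α, downLabels x = upLabels y → y = sInf (κ '' CJR x)) ∧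
    Function.Bijective (fun x : α => sInf (κ '' CJR x)) := by
  have hex : ∀ x : α, ∃ B, IsCanonicalJoinRep x B := fun x => ⟨CJR x, hCJR x⟩
  have hdown : ∀ x, downLabels x = CJR x := fun x => (hCJR x).downLabels_eq hκ
  have hup : ∀ x, upLabels (sInf (κ '' CJR x)) = CJR x := fun x =>
    ((hCJR x).isKappaOrthogonal hκ).upLabels_sInf_kappa_image hκ hex
  have hmeet : ∀ y, sInf (κ '' upLabels y) = y := sInf_kappa_image_upLabels hκ hex
  refine ⟨fun x => ⟨(hdown x).trans (hup x).symm, fun y hy => ?_⟩, fun x z hxz => ?_, fun y => ?_⟩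
  · rw [← hdown, hy, hmeet]
  · have hCJR_eq : CJR x = CJR z := by rw [← hup x, ← hup z]; exact congrArg upLabels hxz
    rw [← (hCJR x).1, ← (hCJR z).1, hCJR_eq]
  · have hjoin : CJR (sSup (upLabels y)) = upLabels y :=
      (hCJR _).eq_of_isKappaOrthogonal hκ (isKappaOrthogonal_upLabels hκ y)
    exact ⟨sSup (upLabels y), by simp only [hjoin, hmeet]⟩

/-- Let `L` be a finite semidistributive lattice, `κ` the kappa map
(for join-irreducible `j`, `κ j` is the greatest element of `{z | j ⊓ z = j_*}`),
and `CJR x` the canonical join representation of `x` (it exists since `L` is a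
finite semidistributive lattice). Set `κ̄ x := ⨅ (κ '' CJR x)`. Then for every `x`
there is a unique `y` with `downLabels x = upLabels y`, this `y` equals `κ̄ x`, and
`κ̄ : L → L` is a bijection. -/
theorem stmt_17 {α : Type*} [CompleteLattice α] [Finite α]
    (hSDj : ∀ (a b : α) (X : Set α), X.Nonempty → (∀ x ∈ X, a ⊔ x = b) → a ⊔ sInf X = b)
    (hSDm : ∀ (a b : α) (X : Set α), X.Nonempty → (∀ x ∈ X, a ⊓ x = b) → a ⊓ sSup X = b)
    (κ : α → α)
    (hκ : ∀ j : α, j ≠ sSup {y : α | y < j} →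
      IsGreatest {z : α | j ⊓ z = sSup {y : α | y < j}} (κ j))
    (CJR : α → Set α) (hCJR : ∀ x : α, IsCanonicalJoinRep x (CJR x)) :
    (∀ x : α, downLabels x = upLabels (sInf (κ '' CJR x)) ∧
      ∀ y : α, downLabels x = upLabels y → y = sInf (κ '' CJR x)) ∧
    Function.Bijective (fun x : α => sInf (κ '' CJR x)) := by
  exact stmt_17_general κ hκ CJR hCJR
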